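/- arXiv:2405.12064 — 2 statements merged into one kernel-verified Lean document; each statement's English description precedes it below -/
import Mathlib

section
/- Fix a half-bandwidth W ∈ (0, 1/2) and ε ∈ (0, 1). Then there exist constants C₁ > 0, C₂ > 0 and an integer N₁ ≥ 1 (all depending only on W and ε) such that for every N ≥ N₁ and every index l with 0 ≤ l ≤ ⌊2NW(1−ε)⌋, the l-th eigenvalue satisfies 1 − λ_{N,W}^{(l)} ≤ C₁·e^{−C₂·N}. -/
open MeasureTheory Matrix Real Set

/-- The 1-D prolate matrix `B_{N,𝕎}` with entries `∫_𝕎 exp(2πi f (m−n)) df`. -/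
noncomputable def prolate1D (N : ℕ) (𝕎 : Set ℝ) : Matrix (Fin N) (Fin N) ℂ :=
  fun m n => ∫ f in 𝕎,
    Complex.exp (2 * (Real.pi : ℂ) * Complex.I * (f : ℂ) * (((m : ℕ) : ℂ) - ((n : ℕ) : ℂ)))

/-!
Write `e_f` for the sampled exponential of frequency `f` and `I = [-1/2, 1/2]`, so that `B_I = 1`.
If `0 ≤ P ≤ 1`, then the diagonal of `P` in an eigenbasis of `B_E` consists of weights in
`[0, 1]`, and since the numbers `1 - λ` increase along the eigenvalues, `l + 1 ≤ tr P` forces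
`1 - λ_l ≤ tr ((1 - B_E) P) = tr (B_{I \ E} P)`.

Such a `P` is obtained by superposing wave packets: take a compact `F` in the interior of `E` and
let `P = ∑ t, D_t B_F D_tᴴ`, where `D_t` is multiplication by the window `s_t`. Its trace is the
number of windows times the measure of `F`, and `tr (B_{I \ E} P)` is the sum over `t` of the
integrals of `|ŝ_t (f - u)|²` over `f ∈ F` and `u ∈ I \ E`, which stay apart modulo `1`. The
windows are translates of row `M` of Pascal's triangle, with `M` a small proportion of `N`: up to
normalization `|ŝ_t (x)|² = |1 + exp (2πix)|^(2M) = (2 + 2 cos (2πx))^M`, which is exponentially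
small compared with `binom (2M) M ≥ 4^M / (2M)` away from the integers.
-/

section EigenvalueBound

open scoped ComplexOrder MatrixOrder

lemma apply_le_sum_mul_of_monotone {N : ℕ} {f w : Fin N → ℝ} (hf : Monotone f)
    (hf_nonneg : ∀ j, 0 ≤ f j) (hw_nonneg : ∀ j, 0 ≤ w j) (hw_le_one : ∀ j, w j ≤ 1)
    {l : Fin N} (hl : (l : ℝ) + 1 ≤ ∑ j, w j) : f l ≤ ∑ j, f j * w j := by
  have pointwise (j : Fin N) : f l * w j - (if j < l then f l else 0) ≤ f j * w j := by
    split_ifs with hj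
    · nlinarith [hf_nonneg l, hf_nonneg j, hw_nonneg j, hw_le_one j]
    · simpa using mul_le_mul_of_nonneg_right (hf (not_lt.1 hj)) (hw_nonneg j)
  have sum_lt : ∑ j, (if j < l then f l else 0) = l * f l := by
    rw [← Finset.sum_filter, Finset.sum_const, nsmul_eq_mul, Finset.filter_gt_eq_Iio, Fin.card_Iio]
  calc f l ≤ f l * ∑ j, w j - l * f l := by nlinarith [hf_nonneg l]
    _ = ∑ j, (f l * w j - if j < l then f l else 0) := by
      rw [Finset.sum_sub_distrib, Finset.mul_sum, sum_lt]
    _ ≤ ∑ j, f j * w j := Finset.sum_le_sum fun j _ => pointwise j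

variable {𝕜 n : Type*} [RCLike 𝕜] [Fintype n] [DecidableEq n] {A : Matrix n n 𝕜}

lemma star_eigenvectorUnitary_mul_one_sub_mul (hA : A.IsHermitian) :
    star (hA.eigenvectorUnitary : Matrix n n 𝕜) * (1 - A) * hA.eigenvectorUnitary =
      diagonal fun i => ((1 - hA.eigenvalues i : ℝ) : 𝕜) := by
  have hdiag := hA.conjStarAlgAut_star_eigenvectorUnitary
  rw [Unitary.conjStarAlgAut_star_apply] at hdiag
  rw [mul_sub, sub_mul, hdiag, mul_one, Unitary.coe_star_mul_self, ← diagonal_one, diagonal_sub]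
  simp

lemma re_trace_one_sub_mul (hA : A.IsHermitian) (P : Matrix n n 𝕜) :
    RCLike.re ((1 - A) * P).trace =
      ∑ i, (1 - hA.eigenvalues i) * RCLike.re
        ((star (hA.eigenvectorUnitary : Matrix n n 𝕜) * P * hA.eigenvectorUnitary) i i) := by
  set U : Matrix n n 𝕜 := (hA.eigenvectorUnitary : Matrix n n 𝕜)
  have hU : U * star U = 1 := Unitary.coe_mul_star_self _
  have conj_mul : star U * (1 - A) * U * (star U * P * U) = star U * ((1 - A) * P) * U := by
    simp only [mul_assoc]
    rw [← mul_assoc U (star U), hU, one_mul]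
  calc RCLike.re ((1 - A) * P).trace
      = RCLike.re (star U * (1 - A) * U * (star U * P * U)).trace := by
        rw [conj_mul, trace_mul_cycle, hU, one_mul]
    _ = _ := by
        rw [star_eigenvectorUnitary_mul_one_sub_mul, trace, map_sum]
        simp only [diag_apply, diagonal_mul, RCLike.re_ofReal_mul, U]

lemma eigenvalues_le_one (hA : A.IsHermitian) (hA_le : A ≤ 1) (i : n) : hA.eigenvalues i ≤ 1 := by
  have hdiag := (star_left_conjugate_nonneg (sub_nonneg.2 hA_le)
    (hA.eigenvectorUnitary : Matrix n n 𝕜)).posSemidef.diag_nonneg (i := i)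
  rw [star_eigenvectorUnitary_mul_one_sub_mul, diagonal_apply_eq, RCLike.ofReal_nonneg] at hdiag
  exact sub_nonneg.1 hdiag

lemma one_sub_eigenvalue_le_re_trace {N : ℕ} {A P : Matrix (Fin N) (Fin N) 𝕜}
    (hA : A.IsHermitian) (hA_le : A ≤ 1) (hP_nonneg : 0 ≤ P) (hP_le : P ≤ 1)
    {μ : Fin N → ℝ} (hμ : Antitone μ) (hμA : ∃ σ : Equiv.Perm (Fin N), hA.eigenvalues = μ ∘ σ)
    {l : Fin N} (hl : (l : ℝ) + 1 ≤ RCLike.re P.trace) :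
    1 - μ l ≤ RCLike.re ((1 - A) * P).trace := by
  obtain ⟨σ, hσ⟩ := hμA
  set U : Matrix (Fin N) (Fin N) 𝕜 := (hA.eigenvectorUnitary : Matrix (Fin N) (Fin N) 𝕜) with hU
  set Q := star U * P * U with hQ
  have hQ_nonneg (i) : 0 ≤ RCLike.re (Q i i) :=
    (RCLike.nonneg_iff.1 (star_left_conjugate_nonneg hP_nonneg U).posSemidef.diag_nonneg).1
  have hQ_le (i) : RCLike.re (Q i i) ≤ 1 := by
    have h := star_left_conjugate_le_conjugate hP_le U
    rw [mul_one, hU, Unitary.coe_star_mul_self] at h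
    simpa using (RCLike.nonneg_iff.1 (le_iff.1 h).diag_nonneg).1
  have hQ_trace : RCLike.re P.trace = ∑ i, RCLike.re (Q i i) := by
    have : Q.trace = P.trace := by
      rw [hQ, trace_mul_cycle, Unitary.mul_star_self_of_mem hA.eigenvectorUnitary.2, one_mul]
    rw [← this, trace, map_sum]
    rfl
  have hμ_le (j) : 0 ≤ 1 - μ j := by
    simpa [hσ] using sub_nonneg.2 (eigenvalues_le_one hA hA_le (σ.symm j))
  rw [re_trace_one_sub_mul hA, ← Equiv.sum_comp σ.symm]
  rw [hQ_trace, ← Equiv.sum_comp σ.symm] at hl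
  simpa [hσ] using apply_le_sum_mul_of_monotone (fun i j hij => sub_le_sub_left (hμ hij) 1) hμ_le
    (fun j => hQ_nonneg (σ.symm j)) (fun j => hQ_le (σ.symm j)) hl

end EigenvalueBound

/-- The complex exponential of frequency `f` sampled at `0, …, N - 1`; prolate matrices are
integrals of the rank-one matrices `e_f e_fᴴ`. -/
noncomputable def sampledExp (N : ℕ) (f : ℝ) : Fin N → ℂ :=
  fun n => Complex.exp ((2 * π * f * n : ℝ) * Complex.I)

section ProlateMatrix

open scoped ComplexOrder MatrixOrder

variable {N : ℕ} {E F : Set ℝ}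

lemma norm_sampledExp (f : ℝ) (n : Fin N) : ‖sampledExp N f n‖ = 1 :=
  Complex.norm_exp_ofReal_mul_I _

lemma continuous_sampledExp : Continuous (sampledExp N) := by
  unfold sampledExp
  fun_prop

lemma star_sampledExp_apply (f : ℝ) (n : Fin N) :
    star (sampledExp N f n) = sampledExp N (-f) n := by
  simp only [sampledExp, Complex.star_def, ← Complex.exp_conj, map_mul, Complex.conj_ofReal,
    Complex.conj_I, mul_neg, neg_mul, Complex.ofReal_neg]

lemma sampledExp_sub_apply (f u : ℝ) (n : Fin N) :
    sampledExp N (f - u) n = sampledExp N f n * star (sampledExp N u n) := by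
  rw [star_sampledExp_apply, sampledExp, sampledExp, sampledExp, ← Complex.exp_add]
  congr 1
  push_cast
  ring

lemma prolate1D_apply (E : Set ℝ) (m n : Fin N) :
    prolate1D N E m n = ∫ f in E, sampledExp N f m * star (sampledExp N f n) := by
  unfold prolate1D
  congr with f
  rw [star_sampledExp_apply, sampledExp, sampledExp, ← Complex.exp_add]
  congr 1
  push_cast
  ring

lemma integrableOn_sampledExp_mul_star (hE : volume E ≠ ⊤) (m n : Fin N) :
    IntegrableOn (fun f => sampledExp N f m * star (sampledExp N f n)) E := by
  have hcont : Continuous fun f => sampledExp N f m * star (sampledExp N f n) := by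
    have := continuous_sampledExp (N := N)
    fun_prop
  refine Measure.integrableOn_of_bounded (M := 1) hE hcont.aestronglyMeasurable
    (.of_forall fun f => ?_)
  rw [norm_mul, norm_star, norm_sampledExp, norm_sampledExp, one_mul]

lemma trace_prolate1D_mul (hE : volume E ≠ ⊤) (X : Matrix (Fin N) (Fin N) ℂ) :
    (prolate1D N E * X).trace = ∫ f in E, star (sampledExp N f) ⬝ᵥ X *ᵥ sampledExp N f := by
  have hint (m n : Fin N) := (integrableOn_sampledExp_mul_star hE m n).mul_const (X n m)
  calc (prolate1D N E * X).trace
      = ∑ m, ∑ n, ∫ f in E, sampledExp N f m * star (sampledExp N f n) * X n m := by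
        simp only [trace, diag_apply, mul_apply, prolate1D_apply, integral_mul_const]
    _ = ∫ f in E, ∑ m, ∑ n, sampledExp N f m * star (sampledExp N f n) * X n m := by
        rw [integral_finsetSum _ fun m _ => integrable_finsetSum _ fun n _ => hint m n]
        exact Finset.sum_congr rfl fun m _ => (integral_finsetSum _ fun n _ => hint m n).symm
    _ = ∫ f in E, star (sampledExp N f) ⬝ᵥ X *ᵥ sampledExp N f := by
        congr with f
        simp only [dotProduct, mulVec, Pi.star_apply, Finset.mul_sum]
        rw [Finset.sum_comm]
        exact Finset.sum_congr rfl fun m _ => Finset.sum_congr rfl fun n _ => by ring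

lemma star_dotProduct_prolate1D_mulVec (hE : volume E ≠ ⊤) (x : Fin N → ℂ) :
    star x ⬝ᵥ prolate1D N E *ᵥ x = ((∫ f in E, ‖star x ⬝ᵥ sampledExp N f‖ ^ 2 : ℝ) : ℂ) := by
  calc star x ⬝ᵥ prolate1D N E *ᵥ x
      = (prolate1D N E * vecMulVec x (star x)).trace := by
        rw [mul_vecMulVec, trace_vecMulVec, dotProduct_comm]
    _ = _ := by
        rw [trace_prolate1D_mul hE, ← integral_complex_ofReal]
        congr with f
        rw [vecMulVec_mulVec, dotProduct_smul, star_dotProduct (sampledExp N f), Complex.ofReal_pow,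
          ← Complex.conj_mul']
        simp [mul_comm]

lemma prolate1D_apply_self (E : Set ℝ) (n : Fin N) : prolate1D N E n n = (volume.real E : ℂ) := by
  simp [prolate1D]

lemma isHermitian_prolate1D (E : Set ℝ) : (prolate1D N E).IsHermitian := by
  ext m n
  rw [conjTranspose_apply, prolate1D_apply, prolate1D_apply, Complex.star_def, ← integral_conj]
  congr with f
  simp [mul_comm]

lemma prolate1D_nonneg (hE : volume E ≠ ⊤) : 0 ≤ prolate1D N E :=
  (PosSemidef.of_dotProduct_mulVec_nonneg (isHermitian_prolate1D E) fun x => by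
    rw [star_dotProduct_prolate1D_mulVec hE, Complex.zero_le_real]
    positivity).nonneg

lemma prolate1D_sdiff (hE : MeasurableSet E) (hEF : E ⊆ F) (hF : volume F ≠ ⊤) :
    prolate1D N (F \ E) = prolate1D N F - prolate1D N E := by
  ext m n
  simp only [Matrix.sub_apply, prolate1D_apply]
  exact setIntegral_sdiff hE (integrableOn_sampledExp_mul_star hF m n) hEF

lemma prolate1D_Icc_neg_half_half : prolate1D N (Icc (-(1 / 2)) (1 / 2)) = 1 := by
  ext m n
  rw [prolate1D, one_apply, integral_Icc_eq_integral_Ioc,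
    ← intervalIntegral.integral_of_le (by norm_num)]
  split_ifs with h
  · subst h
    norm_num
  · have hne : 2 * (π : ℂ) * Complex.I * ((m : ℕ) - (n : ℕ)) ≠ 0 :=
      mul_ne_zero Complex.two_pi_I_ne_zero <|
        sub_ne_zero.2 <| Nat.cast_injective.ne <| Fin.val_injective.ne h
    simp_rw [mul_right_comm _ ((_ : ℝ) : ℂ) (_ - _ : ℂ)]
    rw [integral_exp_mul_complex hne, div_eq_zero_iff, sub_eq_zero]
    refine .inl (Complex.exp_eq_exp_iff_exists_int.2 ⟨m - n, ?_⟩)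
    push_cast
    ring

lemma one_sub_prolate1D (hE : MeasurableSet E) (hE_sub : E ⊆ Icc (-(1 / 2)) (1 / 2)) :
    1 - prolate1D N E = prolate1D N (Icc (-(1 / 2)) (1 / 2) \ E) := by
  rw [prolate1D_sdiff hE hE_sub measure_Icc_lt_top.ne, prolate1D_Icc_neg_half_half]

lemma prolate1D_le_one (hE : MeasurableSet E) (hE_sub : E ⊆ Icc (-(1 / 2)) (1 / 2)) :
    prolate1D N E ≤ 1 := by
  rw [← sub_nonneg, one_sub_prolate1D hE hE_sub]
  exact prolate1D_nonneg (measure_ne_top_of_subset sdiff_subset measure_Icc_lt_top.ne)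

end ProlateMatrix

/-- The time-frequency localization matrix `∑ t, diag (s t) B_{N,F} diag (s t)ᴴ` built from a
finite family of windows `s t`; equivalently, the integral over `t` and `f ∈ F` of the rank-one
matrices of the wave packets `s t * e_f`. -/
noncomputable def localizationMatrix {ι : Type*} [Fintype ι] {N : ℕ} (s : ι → Fin N → ℂ)
    (F : Set ℝ) : Matrix (Fin N) (Fin N) ℂ :=
  ∑ t, diagonal (s t) * prolate1D N F * star (diagonal (s t))

section LocalizationMatrix

open scoped ComplexOrder MatrixOrder

variable {ι : Type*} [Fintype ι] {N : ℕ} {s : ι → Fin N → ℂ} {E F : Set ℝ}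

lemma localizationMatrix_nonneg (hF : volume F ≠ ⊤) : 0 ≤ localizationMatrix s F :=
  Finset.sum_nonneg fun _ _ => star_right_conjugate_nonneg (prolate1D_nonneg hF) _

lemma localizationMatrix_le_one (hF : MeasurableSet F) (hF_sub : F ⊆ Icc (-(1 / 2)) (1 / 2))
    (hs : ∀ n, ∑ t, ‖s t n‖ ^ 2 ≤ 1) : localizationMatrix s F ≤ 1 := by
  calc localizationMatrix s F
      ≤ ∑ t, diagonal (s t) * 1 * star (diagonal (s t)) :=
        Finset.sum_le_sum fun _ _ =>
          star_right_conjugate_le_conjugate (prolate1D_le_one hF hF_sub) _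
    _ = diagonal fun n => ((∑ t, ‖s t n‖ ^ 2 : ℝ) : ℂ) := by
        ext m n
        rcases eq_or_ne m n with rfl | hmn
        · simp [Matrix.sum_apply, star_eq_conjTranspose, Complex.mul_conj']
        · simp [Matrix.sum_apply, star_eq_conjTranspose, hmn]
    _ ≤ 1 := by
        rw [le_iff, ← diagonal_one, diagonal_sub]
        refine PosSemidef.diagonal fun n => ?_
        simpa using mod_cast hs n

lemma trace_localizationMatrix :
    (localizationMatrix s F).trace = ((volume.real F * ∑ t, ∑ n, ‖s t n‖ ^ 2 : ℝ) : ℂ) := by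
  have diag_entry (t : ι) (n : Fin N) :
      (diagonal (s t) * prolate1D N F * star (diagonal (s t))) n n =
        ((volume.real F * ‖s t n‖ ^ 2 : ℝ) : ℂ) := by
    rw [star_eq_conjTranspose, diagonal_conjTranspose, mul_diagonal, diagonal_mul,
      prolate1D_apply_self, mul_right_comm, Pi.star_apply, Complex.star_def, Complex.mul_conj',
      mul_comm]
    push_cast
    rfl
  rw [localizationMatrix, trace_sum]
  simp only [trace, diag_apply, diag_entry, Finset.mul_sum, Complex.ofReal_sum]

lemma star_sampledExp_dotProduct_conj_prolate1D (hF : volume F ≠ ⊤) (v : Fin N → ℂ) (u : ℝ) :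
    star (sampledExp N u) ⬝ᵥ (diagonal v * prolate1D N F * star (diagonal v)) *ᵥ sampledExp N u =
      ((∫ f in F, ‖v ⬝ᵥ sampledExp N (f - u)‖ ^ 2 : ℝ) : ℂ) := by
  have hdot (f : ℝ) : star (star (diagonal v) *ᵥ sampledExp N u) ⬝ᵥ sampledExp N f =
      v ⬝ᵥ sampledExp N (f - u) := by
    rw [star_mulVec, star_eq_conjTranspose, conjTranspose_conjTranspose]
    simp only [dotProduct, vecMul_diagonal, sampledExp_sub_apply, Pi.star_apply]
    exact Finset.sum_congr rfl fun n _ => by ring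
  simp only [← hdot]
  rw [← star_dotProduct_prolate1D_mulVec hF, star_mulVec, ← mulVec_mulVec, ← mulVec_mulVec,
    dotProduct_mulVec, star_eq_conjTranspose, conjTranspose_conjTranspose]

lemma norm_trace_prolate1D_mul_localizationMatrix_le (hE : volume E ≠ ⊤) (hF : volume F ≠ ⊤)
    {K : ℝ} (hs : ∀ t, ∀ u ∈ E, ∀ f ∈ F, ‖s t ⬝ᵥ sampledExp N (f - u)‖ ^ 2 ≤ K) :
    ‖(prolate1D N E * localizationMatrix s F).trace‖ ≤
      Fintype.card ι * (K * volume.real F * volume.real E) := by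
  rw [localizationMatrix, Finset.mul_sum, trace_sum, ← nsmul_eq_mul]
  refine norm_sum_le_of_le _ (fun t _ => ?_) |>.trans_eq (Finset.sum_const _)
  rw [trace_prolate1D_mul hE]
  refine norm_setIntegral_le_of_norm_le_const hE.lt_top fun u hu => ?_
  rw [star_sampledExp_dotProduct_conj_prolate1D hF, Complex.norm_real]
  refine norm_setIntegral_le_of_norm_le_const hF.lt_top fun f hf => ?_
  rw [norm_pow, norm_norm]
  exact hs t u hu f hf

lemma volume_real_le_one_of_subset (hE : E ⊆ Icc (-(1 / 2)) (1 / 2)) : volume.real E ≤ 1 :=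
  (measureReal_mono hE measure_Icc_lt_top.ne).trans_eq (by rw [volume_real_Icc]; norm_num)

lemma one_sub_eigenvalue_prolate1D_le (hE : MeasurableSet E)
    (hE_sub : E ⊆ Icc (-(1 / 2)) (1 / 2)) (hF : MeasurableSet F)
    (hF_sub : F ⊆ Icc (-(1 / 2)) (1 / 2)) (hs_time : ∀ n, ∑ t, ‖s t n‖ ^ 2 ≤ 1)
    (hs_unit : ∀ t, ∑ n, ‖s t n‖ ^ 2 = 1) {K : ℝ} (hK : 0 ≤ K)
    (hs_freq : ∀ t, ∀ u ∈ Icc (-(1 / 2)) (1 / 2) \ E, ∀ f ∈ F,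
      ‖s t ⬝ᵥ sampledExp N (f - u)‖ ^ 2 ≤ K)
    (hA : (prolate1D N E).IsHermitian) {μ : Fin N → ℝ} (hμ : Antitone μ)
    (hμA : ∃ σ : Equiv.Perm (Fin N), hA.eigenvalues = μ ∘ σ) {l : Fin N}
    (hl : (l : ℝ) + 1 ≤ Fintype.card ι * volume.real F) :
    1 - μ l ≤ Fintype.card ι * K := by
  have volume_ne_top {G : Set ℝ} (hG : G ⊆ Icc (-(1 / 2)) (1 / 2)) : volume G ≠ ⊤ :=
    measure_ne_top_of_subset hG measure_Icc_lt_top.ne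
  have htrace : (l : ℝ) + 1 ≤ RCLike.re (localizationMatrix s F).trace := by
    simpa [trace_localizationMatrix, hs_unit, mul_comm] using hl
  calc 1 - μ l
      ≤ RCLike.re ((1 - prolate1D N E) * localizationMatrix s F).trace :=
        one_sub_eigenvalue_le_re_trace hA (prolate1D_le_one hE hE_sub)
          (localizationMatrix_nonneg (volume_ne_top hF_sub))
          (localizationMatrix_le_one hF hF_sub hs_time) hμ hμA htrace
    _ ≤ Fintype.card ι * (K * volume.real F * volume.real (Icc (-(1 / 2) : ℝ) (1 / 2) \ E)) := by
        rw [one_sub_prolate1D hE hE_sub]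
        exact (RCLike.re_le_norm _).trans <| norm_trace_prolate1D_mul_localizationMatrix_le
          (volume_ne_top sdiff_subset) (volume_ne_top hF_sub) hs_freq
    _ ≤ Fintype.card ι * (K * 1 * 1) := by
        gcongr
        exacts [volume_real_le_one_of_subset hF_sub, volume_real_le_one_of_subset sdiff_subset]
    _ = Fintype.card ι * K := by ring

end LocalizationMatrix

open Polynomial in
/-- The window whose entries are the coefficients of `X ^ t (1 + X) ^ M`, that is, the `M`-th row
of Pascal's triangle shifted by `t`, normalized to unit `ℓ²` norm when `t + M < N`. -/
noncomputable def binomialWindow (N M t : ℕ) : Fin N → ℂ :=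
  fun n => (X ^ t * (1 + X) ^ M : ℂ[X]).coeff n / (√(M.centralBinom : ℝ) : ℝ)

section BinomialWindow

lemma sum_range_choose_sq_of_lt {M m : ℕ} (h : M < m) :
    ∑ k ∈ Finset.range m, M.choose k ^ 2 = M.centralBinom := by
  rw [Nat.centralBinom, ← Nat.sum_range_choose_sq]
  refine (Finset.sum_subset (Finset.range_mono h) fun k _ hk => ?_).symm
  rw [Nat.choose_eq_zero_of_lt (by simpa using hk), zero_pow two_ne_zero]

lemma sum_range_choose_sq_le (M m : ℕ) :
    ∑ k ∈ Finset.range m, M.choose k ^ 2 ≤ M.centralBinom := by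
  rw [← sum_range_choose_sq_of_lt (show M < m + (M + 1) by omega)]
  exact Finset.sum_le_sum_of_subset (Finset.range_mono (Nat.le_add_right _ _))

lemma norm_binomialWindow_sq {N : ℕ} (M t : ℕ) (n : Fin N) :
    ‖binomialWindow N M t n‖ ^ 2 =
      (if t ≤ n then M.choose (n - t) ^ 2 else 0 : ℕ) / M.centralBinom := by
  rw [binomialWindow, norm_div, div_pow, Complex.norm_real, norm_of_nonneg (sqrt_nonneg _),
    sq_sqrt (Nat.cast_nonneg _), Polynomial.coeff_X_pow_mul', Polynomial.coeff_one_add_X_pow]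
  split_ifs <;> simp

lemma sum_norm_binomialWindow_sq {N M t : ℕ} (h : t + M < N) :
    ∑ n, ‖binomialWindow N M t n‖ ^ 2 = 1 := by
  have sum_shift : ∑ n : Fin N, (if t ≤ n then M.choose (n - t) ^ 2 else 0) = M.centralBinom := by
    rw [Fin.sum_univ_eq_sum_range fun n => if t ≤ n then M.choose (n - t) ^ 2 else 0,
      ← Finset.sum_filter, Finset.range_eq_Ico, Finset.Ico_filter_le, Nat.zero_max,
      Finset.sum_Ico_eq_sum_range]
    simpa only [Nat.add_sub_cancel_left] using sum_range_choose_sq_of_lt (by omega)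
  simp only [norm_binomialWindow_sq]
  rw [← Finset.sum_div, ← Nat.cast_sum, sum_shift, div_self]
  exact_mod_cast M.centralBinom_ne_zero

lemma sum_shift_norm_binomialWindow_sq_le {N : ℕ} (M T : ℕ) (n : Fin N) :
    ∑ t : Fin T, ‖binomialWindow N M t n‖ ^ 2 ≤ 1 := by
  have sum_shift : ∑ t : Fin T, (if (t : ℕ) ≤ n then M.choose (n - t) ^ 2 else 0) ≤
      M.centralBinom := by
    calc ∑ t : Fin T, (if (t : ℕ) ≤ n then M.choose (n - t) ^ 2 else 0)
        = ∑ t ∈ Finset.range T with t ≤ (n : ℕ), M.choose (n - t) ^ 2 := by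
          rw [Fin.sum_univ_eq_sum_range fun t => if t ≤ n then M.choose (n - t) ^ 2 else 0,
            Finset.sum_filter]
      _ ≤ ∑ t ∈ Finset.range (n + 1), M.choose (n - t) ^ 2 :=
          Finset.sum_le_sum_of_subset fun t ht =>
            Finset.mem_range_succ_iff.2 (Finset.mem_filter.1 ht).2
      _ = ∑ k ∈ Finset.range (n + 1), M.choose k ^ 2 := Finset.sum_flip fun k => M.choose k ^ 2
      _ ≤ M.centralBinom := sum_range_choose_sq_le M _
  simp only [norm_binomialWindow_sq]
  rw [← Finset.sum_div, ← Nat.cast_sum]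
  exact div_le_one_of_le₀ (mod_cast sum_shift) (Nat.cast_nonneg _)

lemma norm_one_add_exp_mul_I_sq (θ : ℝ) :
    ‖1 + Complex.exp (θ * Complex.I)‖ ^ 2 = 2 + 2 * cos θ := by
  rw [← Complex.normSq_eq_norm_sq, Complex.normSq_apply]
  simp only [Complex.add_re, Complex.one_re, Complex.exp_ofReal_mul_I_re, Complex.add_im,
    Complex.one_im, Complex.exp_ofReal_mul_I_im]
  linarith [sin_sq_add_cos_sq θ]

open Polynomial in
lemma norm_binomialWindow_dotProduct_sampledExp_sq {N M t : ℕ} (h : t + M < N) (x : ℝ) :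
    ‖binomialWindow N M t ⬝ᵥ sampledExp N x‖ ^ 2 =
      (2 + 2 * cos (2 * π * x)) ^ M / M.centralBinom := by
  set w : ℂ := Complex.exp ((2 * π * x : ℝ) * Complex.I)
  have sampledExp_eq_pow (n : Fin N) : sampledExp N x n = w ^ (n : ℕ) := by
    rw [sampledExp, ← Complex.exp_nat_mul]
    congr 1
    push_cast
    ring
  have degree_lt : (X ^ t * (1 + X) ^ M : ℂ[X]).natDegree < N :=
    lt_of_le_of_lt (by compute_degree) h
  have response : binomialWindow N M t ⬝ᵥ sampledExp N x =
      w ^ t * (1 + w) ^ M / (√(M.centralBinom : ℝ) : ℝ) := by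
    simp only [dotProduct, binomialWindow, sampledExp_eq_pow, div_mul_eq_mul_div]
    rw [← Finset.sum_div,
      Fin.sum_univ_eq_sum_range fun n => (X ^ t * (1 + X) ^ M : ℂ[X]).coeff n * w ^ n,
      ← eval_eq_sum_range' degree_lt]
    simp only [eval_mul, eval_pow, eval_X, eval_add, eval_one]
  rw [response, norm_div, norm_mul, norm_pow, Complex.norm_exp_ofReal_mul_I, one_pow, one_mul,
    norm_pow, div_pow, pow_right_comm, norm_one_add_exp_mul_I_sq, Complex.norm_real,
    norm_of_nonneg (sqrt_nonneg _), sq_sqrt (Nat.cast_nonneg _)]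

lemma cos_two_pi_mul_le {δ x : ℝ} (hδ : 0 ≤ δ) (h₁ : δ ≤ |x|) (h₂ : |x| ≤ 1 - δ) :
    cos (2 * π * x) ≤ cos (2 * π * δ) := by
  rw [← cos_abs, abs_mul, abs_of_pos two_pi_pos]
  rcases le_total |x| (1 / 2) with h | h
  · exact cos_le_cos_of_nonneg_of_le_pi (by positivity) (by nlinarith [pi_pos]) (by gcongr)
  · rw [← cos_two_pi_sub]
    exact cos_le_cos_of_nonneg_of_le_pi (by positivity) (by nlinarith [pi_pos])
      (by nlinarith [pi_pos])

lemma norm_binomialWindow_dotProduct_sampledExp_sq_le {N M t : ℕ} (h : t + M < N) (hM : 0 < M)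
    {δ x : ℝ} (hδ : 0 ≤ δ) (h₁ : δ ≤ |x|) (h₂ : |x| ≤ 1 - δ) :
    ‖binomialWindow N M t ⬝ᵥ sampledExp N x‖ ^ 2 ≤
      2 * M * ((1 + cos (2 * π * δ)) / 2) ^ M := by
  have hr : 0 ≤ (1 + cos (2 * π * δ)) / 2 := by linarith [neg_one_le_cos (2 * π * δ)]
  rw [norm_binomialWindow_dotProduct_sampledExp_sq h,
    div_le_iff₀ (mod_cast M.centralBinom_pos)]
  calc (2 + 2 * cos (2 * π * x)) ^ M ≤ (4 * ((1 + cos (2 * π * δ)) / 2)) ^ M := by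
        gcongr
        · linarith [neg_one_le_cos (2 * π * x)]
        · linarith [cos_two_pi_mul_le hδ h₁ h₂]
    _ = 4 ^ M * ((1 + cos (2 * π * δ)) / 2) ^ M := mul_pow _ _ _
    _ ≤ (2 * M * M.centralBinom) * ((1 + cos (2 * π * δ)) / 2) ^ M := by
        gcongr
        exact_mod_cast M.four_pow_le_two_mul_self_mul_centralBinom hM
    _ = _ := by ring

lemma one_sub_eigenvalue_prolate1D_le_pow {N M : ℕ} (hM : 0 < M) {E F : Set ℝ} {δ : ℝ}
    (hE : MeasurableSet E) (hE_sub : E ⊆ Icc (-(1 / 2)) (1 / 2)) (hF : MeasurableSet F)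
    (hF_sub : F ⊆ Icc (-(1 / 2)) (1 / 2)) (hδ : 0 ≤ δ)
    (hFE : ∀ f ∈ F, ∀ u ∈ Icc (-(1 / 2)) (1 / 2) \ E, δ ≤ |f - u| ∧ |f - u| ≤ 1 - δ)
    (hA : (prolate1D N E).IsHermitian) {μ : Fin N → ℝ} (hμ : Antitone μ)
    (hμA : ∃ σ : Equiv.Perm (Fin N), hA.eigenvalues = μ ∘ σ) {l : Fin N}
    (hl : (l : ℝ) + 1 ≤ (N - M : ℕ) * volume.real F) :
    1 - μ l ≤ (N - M : ℕ) * (2 * M * ((1 + cos (2 * π * δ)) / 2) ^ M) := by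
  have hr : 0 ≤ (1 + cos (2 * π * δ)) / 2 := by linarith [neg_one_le_cos (2 * π * δ)]
  have shift_lt (t : Fin (N - M)) : t + M < N := by omega
  simpa only [Fintype.card_fin] using
    one_sub_eigenvalue_prolate1D_le (s := fun t : Fin (N - M) => binomialWindow N M t)
      hE hE_sub hF hF_sub (sum_shift_norm_binomialWindow_sq_le M (N - M))
      (fun t => sum_norm_binomialWindow_sq (shift_lt t)) (by positivity)
      (fun t u hu f hf => norm_binomialWindow_dotProduct_sampledExp_sq_le (shift_lt t) hM hδ
        (hFE f hf u hu).1 (hFE f hf u hu).2)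
      hA hμ hμA (by rwa [Fintype.card_fin])

end BinomialWindow

section AsymptoticBound

-- The bound `1 - δ` keeps `f` and `u` apart modulo the period `1` of the sampled exponentials.
lemma exists_isCompact_separated_of_lt_volume_interior {E : Set ℝ}
    (hE_sub : E ⊆ Icc (-(1 / 2)) (1 / 2)) {c : ℝ} (hc : c < volume.real (interior E)) :
    ∃ F ⊆ E, IsCompact F ∧ c < volume.real F ∧ ∃ δ ∈ Ioo (0 : ℝ) (1 / 2),
      ∀ f ∈ F, ∀ u ∈ Icc (-(1 / 2)) (1 / 2) \ E, δ ≤ |f - u| ∧ |f - u| ≤ 1 - δ := by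
  rcases lt_or_ge c 0 with hc_neg | hc_nonneg
  · exact ⟨∅, empty_subset _, isCompact_empty, by simpa using hc_neg, 1 / 4, by norm_num, by simp⟩
  have hE_finite : volume (interior E) ≠ ⊤ :=
    measure_ne_top_of_subset (interior_subset.trans hE_sub) measure_Icc_lt_top.ne
  obtain ⟨F, hFE, hF, hcF⟩ := isOpen_interior.exists_lt_isCompact
    ((ENNReal.ofReal_lt_iff_lt_toReal hc_nonneg hE_finite).2 hc)
  obtain ⟨η, hη, hηE⟩ := hF.exists_cthickening_subset_open isOpen_interior hFE
  have near_mem {f x : ℝ} (hf : f ∈ F) (hx : |x - f| ≤ η) : x ∈ E :=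
    interior_subset <| hηE <| Metric.mem_cthickening_of_dist_le x f η F hf hx
  refine ⟨F, hFE.trans interior_subset, hF,
    (ENNReal.ofReal_lt_iff_lt_toReal hc_nonneg hF.measure_ne_top).1 hcF,
    min η (1 / 4), ⟨by positivity, (min_le_right _ _).trans_lt (by norm_num)⟩,
    fun f hf u hu => ⟨?_, ?_⟩⟩
  · by_contra! hfu
    exact hu.2 (near_mem hf (by rw [abs_sub_comm]; exact (hfu.trans_le (min_le_left _ _)).le))
  · have right_mem := hE_sub (near_mem hf (x := f + η) (by simp [abs_of_pos hη]))
    have left_mem := hE_sub (near_mem hf (x := f - η) (by simp [abs_of_pos hη]))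
    have := min_le_left η (1 / 4)
    rw [abs_le]
    constructor <;> linarith [right_mem.2, left_mem.1, hu.1.1, hu.1.2]

lemma exists_pow_mul_pow_floor_le_mul_exp_neg (k : ℕ) {r θ : ℝ} (hr : r ∈ Ioo 0 1) (hθ : 0 < θ) :
    ∃ C κ : ℝ, 0 < C ∧ 0 < κ ∧ ∀ n : ℕ, (n : ℝ) ^ k * r ^ ⌊θ * n⌋₊ ≤ C * exp (-κ * n) := by
  set κ : ℝ := -log r * θ / 2 with hκ_def
  have hlog : log r < 0 := log_neg hr.1 hr.2
  have hκ : 0 < κ := div_pos (mul_pos (neg_pos.2 hlog) hθ) two_pos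
  refine ⟨k.factorial / κ ^ k * exp (-log r), κ, by positivity, hκ, fun n => ?_⟩
  have poly_le : (n : ℝ) ^ k ≤ k.factorial / κ ^ k * exp (κ * n) := by
    have := pow_div_factorial_le_exp (κ * n) (by positivity) k
    rw [div_le_iff₀ (by positivity), mul_pow] at this
    rw [div_mul_eq_mul_div, le_div_iff₀ (by positivity)]
    linarith
  have geom_le : r ^ ⌊θ * n⌋₊ ≤ exp (-log r) * exp (-(2 * κ * n)) := by
    rw [← exp_log hr.1, ← exp_nat_mul, log_exp, ← exp_add, exp_le_exp, hκ_def]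
    nlinarith [Nat.lt_floor_add_one (θ * n)]
  calc (n : ℝ) ^ k * r ^ ⌊θ * n⌋₊
      ≤ (k.factorial / κ ^ k * exp (κ * n)) * (exp (-log r) * exp (-(2 * κ * n))) :=
        mul_le_mul poly_le geom_le (pow_nonneg hr.1.le _) (by positivity)
    _ = k.factorial / κ ^ k * exp (-log r) * exp (κ * n + -(2 * κ * n)) := by
        rw [exp_add]
        ring
    _ = k.factorial / κ ^ k * exp (-log r) * exp (-κ * n) := by
        congr 2
        ring

lemma half_one_add_cos_mem_Ioo {δ : ℝ} (hδ : δ ∈ Ioo (0 : ℝ) (1 / 2)) :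
    (1 + cos (2 * π * δ)) / 2 ∈ Ioo (0 : ℝ) 1 := by
  have half_angle : (1 + cos (2 * π * δ)) / 2 = cos (π * δ) ^ 2 := by
    rw [cos_sq, mul_assoc]
    ring
  have hπδ_pos : 0 < π * δ := mul_pos pi_pos hδ.1
  have hπδ_lt : π * δ < π / 2 := by nlinarith [pi_pos, hδ.2]
  have hcos : 0 < cos (π * δ) := cos_pos_of_mem_Ioo ⟨by linarith, hπδ_lt⟩
  have hsin : 0 < sin (π * δ) := sin_pos_of_pos_of_lt_pi hπδ_pos (by linarith)
  rw [half_angle]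
  exact ⟨by positivity, by nlinarith [sin_sq_add_cos_sq (π * δ)]⟩

theorem dpss_eigenvalue_cluster_near_one_general {E : Set ℝ} (hE : MeasurableSet E)
    (hE_sub : E ⊆ Icc (-(1 / 2)) (1 / 2)) {c : ℝ} (hc : c < volume.real (interior E)) :
    ∃ (C₁ C₂ : ℝ) (N₁ : ℕ), 0 < C₁ ∧ 0 < C₂ ∧ 1 ≤ N₁ ∧
      ∀ (N : ℕ), N₁ ≤ N → ∀ (hA : (prolate1D N E).IsHermitian) (μ : Fin N → ℝ), Antitone μ →
        (∃ σ : Equiv.Perm (Fin N), hA.eigenvalues = μ ∘ σ) →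
        ∀ l : Fin N, (l : ℝ) ≤ c * N → 1 - μ l ≤ C₁ * exp (-C₂ * N) := by
  obtain ⟨F, hFE, hF, hcF, δ, hδ, hsep⟩ :=
    exists_isCompact_separated_of_lt_volume_interior hE_sub hc
  obtain ⟨θ, hθ, hθ_eq⟩ : ∃ θ > 0, volume.real F = c + 2 * θ :=
    ⟨(volume.real F - c) / 2, by linarith, by ring⟩
  have hF_le_one : volume.real F ≤ 1 := volume_real_le_one_of_subset (hFE.trans hE_sub)
  have hr := half_one_add_cos_mem_Ioo hδ
  set r := (1 + cos (2 * π * δ)) / 2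
  obtain ⟨C, κ, hC, hκ, hdecay⟩ := exists_pow_mul_pow_floor_le_mul_exp_neg 2 hr hθ
  refine ⟨2 * θ * C, κ, ⌈1 / θ⌉₊ + 1, by positivity, hκ, by omega, ?_⟩
  intro N hN hA μ hμ hμA l hl
  set M := ⌊θ * N⌋₊
  have hθN : 1 ≤ θ * N := by
    rw [← div_le_iff₀' hθ]
    exact (Nat.le_ceil _).trans (mod_cast (Nat.le_succ _).trans hN)
  have hM_le : (M : ℝ) ≤ θ * N := Nat.floor_le (by positivity)
  have hshifts_le : ((N - M : ℕ) : ℝ) ≤ N := mod_cast Nat.sub_le N M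
  have hle_shifts : (N : ℝ) - M ≤ (N - M : ℕ) := sub_le_iff_le_add.2 (mod_cast le_tsub_add)
  have index_le : (l : ℝ) + 1 ≤ (N - M : ℕ) * volume.real F := by
    calc (l : ℝ) + 1 ≤ N * volume.real F - θ * N := by
          rw [hθ_eq]
          linarith
      _ ≤ (N - M) * volume.real F := by nlinarith [measureReal_nonneg (μ := volume) (s := F)]
      _ ≤ (N - M : ℕ) * volume.real F := by gcongr
  calc 1 - μ l ≤ (N - M : ℕ) * (2 * M * r ^ M) :=
        one_sub_eigenvalue_prolate1D_le_pow (Nat.floor_pos.2 hθN) hE hE_sub hF.measurableSet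
          (hFE.trans hE_sub) hδ.1.le hsep hA hμ hμA index_le
    _ ≤ N * (2 * (θ * N) * r ^ M) := by
        have := hr.1
        gcongr
    _ = 2 * θ * (N ^ 2 * r ^ M) := by ring
    _ ≤ 2 * θ * (C * exp (-κ * N)) := mul_le_mul_of_nonneg_left (hdecay N) (by positivity)
    _ = 2 * θ * C * exp (-κ * N) := by ring

end AsymptoticBound

theorem dpss_eigenvalue_cluster_near_one
    (W : ℝ) (hW : W ∈ Set.Ioo (0 : ℝ) (1 / 2)) (ε : ℝ) (hε : ε ∈ Set.Ioo (0 : ℝ) 1) :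
    ∃ (C₁ C₂ : ℝ) (N₁ : ℕ), 0 < C₁ ∧ 0 < C₂ ∧ 1 ≤ N₁ ∧
      ∀ (N : ℕ), N₁ ≤ N →
        ∀ (hA : (prolate1D N (Set.Icc (-W) W)).IsHermitian) (μ : Fin N → ℝ),
          Antitone μ →
          (∃ σ : Equiv.Perm (Fin N), hA.eigenvalues = μ ∘ σ) →
          ∀ l : Fin N, (l : ℕ) ≤ ⌊2 * (N : ℝ) * W * (1 - ε)⌋₊ →
            1 - μ l ≤ C₁ * Real.exp (-C₂ * (N : ℝ)) := by
  obtain ⟨hW_pos, hW_lt⟩ := hW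
  obtain ⟨hε_pos, hε_lt⟩ := hε
  have index_rate_lt : 2 * W * (1 - ε) < volume.real (interior (Icc (-W) W)) := by
    rw [interior_Icc, volume_real_Ioo_of_le (by linarith)]
    nlinarith
  obtain ⟨C₁, C₂, N₁, hC₁, hC₂, hN₁, hbound⟩ := dpss_eigenvalue_cluster_near_one_general
    measurableSet_Icc (Icc_subset_Icc (by linarith) hW_lt.le) index_rate_lt
  refine ⟨C₁, C₂, N₁, hC₁, hC₂, hN₁, fun N hN hA μ hμ hμA l hl => hbound N hN hA μ hμ hμA l ?_⟩
  have hpos : 0 ≤ 2 * (N : ℝ) * W * (1 - ε) :=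
    mul_nonneg (by positivity) (sub_nonneg.2 hε_lt.le)
  linarith [(Nat.le_floor_iff hpos).1 hl]
end

section
/- Fix a half-bandwidth W ∈ (0, 1/2) and ε ∈ (0, 1/(2W) − 1). Then there exist constants C₃ > 0, C₄ > 0 and an integer N₂ ≥ 1 (all depending only on W and ε) such that for every N ≥ N₂ and every index l with ⌈2NW(1+ε)⌉ ≤ l ≤ N−1, the l-th eigenvalue satisfies λ_{N,W}^{(l)} ≤ C₃·e^{−C₄·N}. -/
open MeasureTheory Matrix Real Set

/-!
Put `λ = μ l`. At least `l + 1` eigenvalues of the prolate matrix `B` are `≥ λ`, so the span of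
their eigenvectors contains some `v ≠ 0` whose discrete-time Fourier transform `V` vanishes at `l`
prescribed frequencies, while `λ ‖v‖² ≤ ⟨v, B v⟩ = ∫_𝕎 |V|²`. It therefore suffices to choose the
zeros so as to make `V` exponentially small on `[-W, W]`.

Take them to be the points `k / M`, `|k| ≤ L`, of a slightly oversampled grid covering slightly more
than `[-W, W]`: `M = r N` with `1 < r < √(1 + ε)`, and `L ≈ N W r²`. The entire function
`F z = exp (π i N z / M) V (z / M)` has exponential type `π N / M < π` and vanishes at these
integers `k`, so `F z / sin (π z)` is holomorphic for `|Re z| < L + 1` and, away from the real axis,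
decays like `exp (-π (1 - N / M) |Im z|)`. The maximum principle on a rectangle, applied after
multiplication by a Gaussian, turns this into a bound on the real axis exponentially small in `N`.
-/

open scoped InnerProductSpace

section Quotient

open Filter Topology

lemma differentiableAt_ite_div_of_simple_zero {f g : ℂ → ℂ} {z : ℂ} {U : Set ℂ} (hU : U ∈ 𝓝 z)
    (hf : DifferentiableOn ℂ f U) (hg : DifferentiableOn ℂ g U) (hgz : g z = 0)
    (hfz : f z = 0) (hdg : deriv g z ≠ 0) :
    DifferentiableAt ℂ (fun w ↦ if g w = 0 then deriv f w / deriv g w else f w / g w) z := by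
  have hdslope {k : ℂ → ℂ} (hk : DifferentiableOn ℂ k U) : DifferentiableAt ℂ (dslope k z) z :=
    ((Complex.differentiableOn_dslope hU).2 hk).differentiableAt hU
  have hg₀ : dslope g z z ≠ 0 := by rwa [dslope_same]
  refine ((hdslope hf).div (hdslope hg) hg₀).congr_of_eventuallyEq ?_
  filter_upwards [(hdslope hg).continuousAt.eventually_ne hg₀] with w hw
  rcases eq_or_ne w z with rfl | hwz
  · simp [hgz]
  · have hf_eq := sub_smul_dslope_of_zero hfz w
    have hg_eq := sub_smul_dslope_of_zero hgz w
    have hsub : w - z ≠ 0 := sub_ne_zero.2 hwz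
    have hgw : g w ≠ 0 := by
      rw [← hg_eq]
      exact smul_ne_zero hsub hw
    rw [if_neg hgw, ← hf_eq, ← hg_eq, smul_eq_mul, smul_eq_mul, mul_div_mul_left _ _ hsub]
    rfl

lemma exists_differentiableOn_eq_mul_of_simple_zeros {f g : ℂ → ℂ} {U : Set ℂ} (hU : IsOpen U)
    (hf : DifferentiableOn ℂ f U) (hg : DifferentiableOn ℂ g U)
    (hfz : ∀ z ∈ U, g z = 0 → f z = 0) (hdg : ∀ z ∈ U, g z = 0 → deriv g z ≠ 0) :
    ∃ q : ℂ → ℂ, DifferentiableOn ℂ q U ∧ ∀ z ∈ U, f z = q z * g z := by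
  refine ⟨fun w ↦ if g w = 0 then deriv f w / deriv g w else f w / g w, fun z hz ↦ ?_,
    fun z hz ↦ ?_⟩
  · have hUz := hU.mem_nhds hz
    refine DifferentiableAt.differentiableWithinAt ?_
    by_cases hgz : g z = 0
    · exact differentiableAt_ite_div_of_simple_zero hUz hf hg hgz (hfz z hz hgz) (hdg z hz hgz)
    · refine ((hf.differentiableAt hUz).div (hg.differentiableAt hUz) hgz).congr_of_eventuallyEq ?_
      filter_upwards [(hg.differentiableAt hUz).continuousAt.eventually_ne hgz] with w hw
      rw [if_neg hw]
      rfl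
  · by_cases hgz : g z = 0
    · simp [hgz, hfz z hz hgz]
    · simp [hgz]

end Quotient

lemma norm_le_of_forall_norm_le_boundary_rectangle {F : Type*} [NormedAddCommGroup F]
    [NormedSpace ℂ F] {f : ℂ → F} {X h C : ℝ} (hX : 0 < X) (hh : 0 < h)
    (hf : DifferentiableOn ℂ f (Icc (-X) X ×ℂ Icc (-h) h))
    (hC : ∀ w : ℂ, |w.re| ≤ X → |w.im| ≤ h → |w.re| = X ∨ |w.im| = h → ‖f w‖ ≤ C)
    {z : ℂ} (hz : z ∈ Icc (-X) X ×ℂ Icc (-h) h) : ‖f z‖ ≤ C := by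
  have hclosure : closure (Ioo (-X) X ×ℂ Ioo (-h) h) = Icc (-X) X ×ℂ Icc (-h) h := by
    rw [Complex.closure_reProdIm, closure_Ioo (by linarith), closure_Ioo (by linarith)]
  rw [← hclosure] at hf hz
  refine Complex.norm_le_of_forall_mem_frontier_norm_le
    ((Metric.isBounded_Ioo _ _).reProdIm (Metric.isBounded_Ioo _ _)) hf.diffContOnCl
    (fun w hw ↦ ?_) hz
  rw [Complex.frontier_reProdIm, closure_Ioo (by linarith), closure_Ioo (by linarith),
    frontier_Ioo (by linarith), frontier_Ioo (by linarith)] at hw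
  rcases hw with ⟨hre, him⟩ | ⟨hre, him⟩
  · have him' : |w.im| = h := by
      rcases him with him | him <;> simp_all [abs_of_pos hh]
    exact hC w (abs_le.2 hre) him'.le (.inr him')
  · have hre' : |w.re| = X := by
      rcases hre with hre | hre <;> simp_all [abs_of_pos hX]
    exact hC w hre'.le (abs_le.2 him) (.inl hre')

lemma sq_norm_sin (z : ℂ) : ‖Complex.sin z‖ ^ 2 = sin z.re ^ 2 + sinh z.im ^ 2 := by
  rw [← Complex.normSq_eq_norm_sq, Complex.sin_eq, Complex.normSq_apply]
  simp only [← Complex.ofReal_sin, ← Complex.ofReal_cos, ← Complex.ofReal_sinh,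
    ← Complex.ofReal_cosh, ← Complex.ofReal_mul, Complex.add_re, Complex.add_im, Complex.ofReal_re,
    Complex.ofReal_im, Complex.re_ofReal_mul, Complex.im_ofReal_mul, Complex.I_re, Complex.I_im]
  linear_combination sin z.re ^ 2 * cosh_sq z.im + sinh z.im ^ 2 * cos_sq' z.re

lemma norm_sin_eq_cosh_im_of_cos_re_eq_zero {z : ℂ} (hz : cos z.re = 0) :
    ‖Complex.sin z‖ = cosh z.im := by
  rw [← sq_eq_sq₀ (norm_nonneg _) (cosh_pos _).le, sq_norm_sin, sin_sq, hz, cosh_sq]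
  ring

lemma sinh_abs_im_le_norm_sin (z : ℂ) : sinh |z.im| ≤ ‖Complex.sin z‖ := by
  refine le_of_sq_le_sq ?_ (norm_nonneg _)
  rw [sq_norm_sin, ← abs_sinh, sq_abs]
  exact le_add_of_nonneg_left (sq_nonneg _)

lemma exp_div_four_le_sinh {y : ℝ} (hy : 1 / 2 ≤ y) : exp y / 4 ≤ sinh y := by
  have hexp_sq : 2 ≤ exp y * exp y := by
    rw [← exp_add]
    linarith [add_one_le_exp (y + y)]
  have hexp_neg : exp (-y) ≤ exp y / 2 := by
    rw [exp_neg, inv_le_iff_one_le_mul₀ (exp_pos y)]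
    linarith
  rw [sinh_eq]
  linarith

lemma exp_abs_im_div_four_le_norm_sin {z : ℂ} (hz : cos z.re = 0 ∨ 1 / 2 ≤ |z.im|) :
    exp |z.im| / 4 ≤ ‖Complex.sin z‖ := by
  rcases hz with hre | him
  · rw [norm_sin_eq_cosh_im_of_cos_re_eq_zero hre, ← cosh_abs, cosh_eq]
    linarith [exp_pos |z.im|, exp_pos (-|z.im|)]
  · exact (exp_div_four_le_sinh him).trans (sinh_abs_im_le_norm_sin z)

lemma exp_pi_mul_abs_im_div_four_le_norm_sin_pi_mul {w : ℂ} {L : ℕ}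
    (hw : |w.re| = L + 1 / 2 ∨ 1 / 2 ≤ |w.im|) :
    exp (π * |w.im|) / 4 ≤ ‖Complex.sin (π * w)‖ := by
  have him : |((π : ℂ) * w).im| = π * |w.im| := by
    rw [Complex.im_ofReal_mul, abs_mul, abs_of_pos pi_pos]
  rw [← him]
  refine exp_abs_im_div_four_le_norm_sin (hw.imp (fun hre ↦ ?_) fun h ↦ ?_)
  · rw [Complex.re_ofReal_mul, ← cos_abs, abs_mul, abs_of_pos pi_pos, hre, cos_eq_zero_iff]
    exact ⟨L, by push_cast; ring⟩
  · rw [him]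
    exact h.trans (le_mul_of_one_le_left (abs_nonneg _) (by linarith [pi_gt_three]))

lemma sin_pi_mul_eq_zero_iff {z : ℂ} : Complex.sin (π * z) = 0 ↔ ∃ k : ℤ, z = k := by
  have hpi : (π : ℂ) ≠ 0 := by exact_mod_cast pi_ne_zero
  simp only [Complex.sin_eq_zero_iff, mul_comm (π : ℂ) z, mul_left_inj' hpi]

lemma deriv_sin_pi_mul_ne_zero {z : ℂ} (hz : Complex.sin (π * z) = 0) :
    deriv (fun w : ℂ ↦ Complex.sin (π * w)) z ≠ 0 := by
  have hderiv : HasDerivAt (fun w : ℂ ↦ Complex.sin (π * w)) (Complex.cos (π * z) * π) z := by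
    simpa using ((hasDerivAt_id z).const_mul (π : ℂ)).csin
  rw [hderiv.deriv]
  refine mul_ne_zero (fun hcos ↦ ?_) (by exact_mod_cast pi_ne_zero)
  simpa [hz, hcos] using Complex.sin_sq_add_cos_sq (π * z)

lemma exists_eq_mul_sin_pi_mul {F : ℂ → ℂ} {L : ℕ} (hF : Differentiable ℂ F)
    (hzero : ∀ k : ℤ, |k| ≤ L → F k = 0) :
    ∃ q : ℂ → ℂ, DifferentiableOn ℂ q {z | |z.re| < L + 1} ∧
      ∀ z : ℂ, |z.re| < L + 1 → F z = q z * Complex.sin (π * z) := by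
  refine exists_differentiableOn_eq_mul_of_simple_zeros
    (isOpen_lt (by fun_prop) continuous_const) hF.differentiableOn
    (by fun_prop : Differentiable ℂ fun w : ℂ ↦ Complex.sin (π * w)).differentiableOn
    (fun z hz hsin ↦ ?_) fun z _ hsin ↦ deriv_sin_pi_mul_ne_zero hsin
  obtain ⟨k, rfl⟩ := sin_pi_mul_eq_zero_iff.1 hsin
  have hk : ((|k| : ℤ) : ℝ) < ((L + 1 : ℤ) : ℝ) := by simpa using hz
  exact hzero k (Int.lt_add_one_iff.1 (by exact_mod_cast hk))

lemma norm_exp_neg_mul_sub_sq (c x : ℝ) (w : ℂ) :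
    ‖Complex.exp (-(c * (w - x) ^ 2))‖ = exp (c * (w.im ^ 2 - (w.re - x) ^ 2)) := by
  rw [Complex.norm_exp]
  congr 1
  simp only [pow_two, Complex.neg_re, Complex.mul_re, Complex.ofReal_re, Complex.sub_re,
    Complex.sub_im, Complex.ofReal_im, sub_zero, Complex.mul_im, zero_mul]
  ring

lemma neg_mul_abs_add_mul_sq_sub_sq_le {β a s u : ℝ} (hβ : 0 ≤ β) (ha : 0 < a)
    (h : |s| = a / 2 ∨ |s| ≤ a / 2 ∧ a ≤ |u|) :
    -(β * |s|) + β / a * (s ^ 2 - u ^ 2) ≤ -(β * a / 4) := by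
  suffices hquad : -|s| * a + (s ^ 2 - u ^ 2) ≤ -(a ^ 2 / 4) by
    have := mul_le_mul_of_nonneg_left hquad (div_nonneg hβ ha.le)
    calc _ = β / a * (-|s| * a + (s ^ 2 - u ^ 2)) := by field_simp
      _ ≤ _ := this
      _ = _ := by field_simp
  rw [← sq_abs s, ← sq_abs u]
  rcases h with hs | ⟨hs, hu⟩
  · rw [hs]
    nlinarith [sq_nonneg |u|]
  · nlinarith [abs_nonneg s]

lemma norm_le_mul_exp_neg_of_rectangle_boundary {q : ℂ → ℂ} {B X a x β : ℝ} (hβ : 0 ≤ β)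
    (ha : 0 < a) (hx : |x| + a ≤ X)
    (hq : DifferentiableOn ℂ q (Icc (-X) X ×ℂ Icc (-(a / 2)) (a / 2)))
    (hbound : ∀ w : ℂ, |w.re| ≤ X → |w.im| ≤ a / 2 → |w.re| = X ∨ |w.im| = a / 2 →
      ‖q w‖ ≤ B * exp (-(β * |w.im|))) :
    ‖q x‖ ≤ B * exp (-(β * a / 4)) := by
  have hxX : |x| ≤ X := by linarith
  have hX : 0 < X := by linarith [abs_nonneg x]
  have hB : 0 ≤ B := by
    have hcorner := (norm_nonneg _).trans (hbound X (by simp [abs_of_pos hX])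
      (by simpa using by positivity) (.inl (by simp [abs_of_pos hX])))
    simpa using hcorner
  -- The Gaussian centred at `x` makes the vertical sides harmless; its growth on the horizontal
  -- sides is absorbed by the decay of `q` there.
  let H : ℂ → ℂ := fun w ↦ q w * Complex.exp (-((β / a : ℝ) * (w - x) ^ 2))
  suffices hHx : ‖H x‖ ≤ B * exp (-(β * a / 4)) by simpa [H] using hHx
  refine norm_le_of_forall_norm_le_boundary_rectangle hX (half_pos ha) (f := H)
    (hq.mul (by fun_prop)) (fun w hre him hw ↦ ?_)
    ⟨abs_le.1 (by simpa using hxX), by simpa using (half_pos ha).le⟩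
  have hexponent : -(β * |w.im|) + β / a * (w.im ^ 2 - (w.re - x) ^ 2) ≤ -(β * a / 4) := by
    refine neg_mul_abs_add_mul_sq_sub_sq_le hβ ha (hw.symm.imp_right fun h ↦ ⟨him, ?_⟩)
    linarith [abs_sub_abs_le_abs_sub w.re x]
  calc ‖H w‖ = ‖q w‖ * exp (β / a * (w.im ^ 2 - (w.re - x) ^ 2)) := by
        rw [norm_mul, norm_exp_neg_mul_sub_sq]
    _ ≤ B * exp (-(β * |w.im|)) * exp (β / a * (w.im ^ 2 - (w.re - x) ^ 2)) := by
        gcongr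
        exact hbound w hre him hw
    _ = B * exp (-(β * |w.im|) + β / a * (w.im ^ 2 - (w.re - x) ^ 2)) := by
        rw [exp_add, mul_assoc]
    _ ≤ B * exp (-(β * a / 4)) := by gcongr

lemma norm_le_of_forall_int_eq_zero {F : ℂ → ℂ} {A θ a x : ℝ} {L : ℕ} (hF : Differentiable ℂ F)
    (hgrowth : ∀ z, ‖F z‖ ≤ A * exp (π * θ * |z.im|)) (hzero : ∀ k : ℤ, |k| ≤ L → F k = 0)
    (hθ : θ ≤ 1) (ha : 1 ≤ a) (hx : |x| + a ≤ L + 1 / 2) :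
    ‖F x‖ ≤ 4 * A * exp (-(π * (1 - θ) * a / 4)) := by
  obtain ⟨q, hq, hFq⟩ := exists_eq_mul_sin_pi_mul hF hzero
  have hqx : ‖q x‖ ≤ 4 * A * exp (-(π * (1 - θ) * a / 4)) := by
    refine norm_le_mul_exp_neg_of_rectangle_boundary (mul_nonneg pi_nonneg (sub_nonneg.2 hθ))
      (by linarith) hx (hq.mono fun w hw ↦ (abs_le.2 hw.1).trans_lt (by linarith))
      fun w hre _ hw ↦ ?_
    have hsin : exp (π * |w.im|) / 4 ≤ ‖Complex.sin (π * w)‖ :=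
      exp_pi_mul_abs_im_div_four_le_norm_sin_pi_mul (hw.imp_right fun h ↦ by linarith)
    refine le_of_mul_le_mul_right ?_ (by positivity : 0 < exp (π * |w.im|) / 4)
    calc ‖q w‖ * (exp (π * |w.im|) / 4) ≤ ‖q w‖ * ‖Complex.sin (π * w)‖ := by gcongr
      _ = ‖F w‖ := by rw [← norm_mul, hFq w (by linarith)]
      _ ≤ A * exp (π * θ * |w.im|) := hgrowth w
      _ = A * exp (-(π * (1 - θ) * |w.im|) + π * |w.im|) := by congr 2; ring
      _ = 4 * A * exp (-(π * (1 - θ) * |w.im|)) * (exp (π * |w.im|) / 4) := by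
        rw [exp_add]; ring
  calc ‖F x‖ = ‖q x‖ * ‖Complex.sin (π * x)‖ := by
        rw [hFq x (by rw [Complex.ofReal_re]; linarith), norm_mul]
    _ ≤ ‖q x‖ := by
        refine mul_le_of_le_one_right (norm_nonneg _) ?_
        rw [← Complex.ofReal_mul, ← Complex.ofReal_sin, Complex.norm_real]
        exact abs_sin_le_one _
    _ ≤ 4 * A * exp (-(π * (1 - θ) * a / 4)) := hqx

section Rayleigh

variable {𝕜 E ι G : Type*} [RCLike 𝕜] [NormedAddCommGroup E] [InnerProductSpace 𝕜 E] [Fintype ι]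
  [AddCommGroup G] [Module 𝕜 G] [FiniteDimensional 𝕜 G]

lemma re_inner_map_self_eq_sum {T : E →ₗ[𝕜] E} {b : OrthonormalBasis ι 𝕜 E} {μ : ι → ℝ}
    (hb : ∀ i, T (b i) = (μ i : 𝕜) • b i) (v : E) :
    RCLike.re ⟪v, T v⟫_𝕜 = ∑ i, μ i * ‖⟪b i, v⟫_𝕜‖ ^ 2 := by
  have hTv : T v = ∑ i, (⟪b i, v⟫_𝕜 * μ i) • b i := by
    conv_lhs => rw [← b.sum_repr' v]
    simp only [map_sum, map_smul, hb, smul_smul]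
  rw [hTv, inner_sum, map_sum]
  refine Finset.sum_congr rfl fun i _ ↦ ?_
  rw [inner_smul_right, mul_right_comm, mul_comm, RCLike.re_ofReal_mul, inner_mul_symm_re_eq_norm,
    norm_mul, norm_inner_symm v, ← sq]

lemma exists_ne_zero_map_eq_zero_mul_sq_norm_le {T : E →ₗ[𝕜] E} {b : OrthonormalBasis ι 𝕜 E}
    {μ : ι → ℝ} (hb : ∀ i, T (b i) = (μ i : 𝕜) • b i) (g : E →ₗ[𝕜] G) {t : ℝ}
    (hcard : Module.finrank 𝕜 G < Fintype.card {i // t ≤ μ i}) :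
    ∃ v ≠ 0, g v = 0 ∧ t * ‖v‖ ^ 2 ≤ RCLike.re ⟪v, T v⟫_𝕜 := by
  have : FiniteDimensional 𝕜 E := b.toBasis.finiteDimensional_of_finite
  let lowCoords : E →ₗ[𝕜] ({i // ¬ t ≤ μ i} → 𝕜) := LinearMap.pi fun i ↦ (innerₛₗ 𝕜) (b i)
  have hker : LinearMap.ker (g.prod lowCoords) ≠ ⊥ := by
    apply LinearMap.ker_ne_bot_of_finrank_lt
    rw [Module.finrank_prod, Module.finrank_fintype_fun_eq_card, Fintype.card_subtype_compl,
      Module.finrank_eq_card_basis b.toBasis]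
    have := Fintype.card_subtype_le fun i ↦ t ≤ μ i
    omega
  obtain ⟨v, hv, hv₀⟩ := Submodule.exists_mem_ne_zero_of_ne_bot hker
  obtain ⟨hgv, hlow⟩ : g v = 0 ∧ lowCoords v = 0 := Prod.mk_inj.1 hv
  refine ⟨v, hv₀, hgv, ?_⟩
  rw [re_inner_map_self_eq_sum hb, ← b.sum_sq_norm_inner_right, Finset.mul_sum]
  refine Finset.sum_le_sum fun i _ ↦ ?_
  by_cases hi : t ≤ μ i
  · gcongr
  · have hcoord : ⟪b i, v⟫_𝕜 = 0 := congrFun hlow ⟨i, hi⟩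
    simp [hcoord]

lemma exists_ne_zero_map_eq_zero_mul_sq_norm_le_of_isHermitian [DecidableEq ι] {A : Matrix ι ι 𝕜}
    (hA : A.IsHermitian) (g : EuclideanSpace 𝕜 ι →ₗ[𝕜] G) {t : ℝ}
    (hcard : Module.finrank 𝕜 G < Fintype.card {i // t ≤ hA.eigenvalues i}) :
    ∃ v ≠ 0, g v = 0 ∧ t * ‖v‖ ^ 2 ≤ RCLike.re ⟪v, toEuclideanLin A v⟫_𝕜 := by
  refine exists_ne_zero_map_eq_zero_mul_sq_norm_le (b := hA.eigenvectorBasis) (fun i ↦ ?_) g hcard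
  ext j
  simp [toLpLin_apply, hA.mulVec_eigenvectorBasis, RCLike.real_smul_eq_coe_mul]

end Rayleigh

lemma lt_card_subtype_le_comp_perm_of_antitone {α : Type*} [LinearOrder α] {N : ℕ} {μ : Fin N → α}
    (hμ : Antitone μ) (σ : Equiv.Perm (Fin N)) (l : Fin N) :
    (l : ℕ) < Fintype.card {i // μ l ≤ (μ ∘ σ) i} := by
  simp only [Function.comp_apply]
  rw [Fintype.card_congr (σ.subtypeEquiv (q := fun j ↦ μ l ≤ μ j) fun _ ↦ Iff.rfl)]
  calc (l : ℕ) < (Finset.Iic l).card := by simp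
    _ ≤ _ := by
      rw [Fintype.card_subtype]
      exact Finset.card_le_card fun i hi ↦ by simpa using hμ (Finset.mem_Iic.1 hi)

lemma sum_norm_le_sqrt_card_mul_norm {𝕜 ι : Type*} [RCLike 𝕜] [Fintype ι] (v : EuclideanSpace 𝕜 ι) :
    ∑ i, ‖v i‖ ≤ √(Fintype.card ι) * ‖v‖ := by
  refine le_of_sq_le_sq ?_ (by positivity)
  rw [mul_pow, sq_sqrt (by positivity), EuclideanSpace.norm_sq_eq]
  exact sq_sum_le_card_mul_sum_sq (s := Finset.univ) (f := fun i ↦ ‖v i‖)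

/-- The discrete-time Fourier transform `∑ n, v n * exp (-2πinz)` of a finite signal `v`, at a
frequency `z` that is allowed to be complex; bundled as a linear functional of `v`, so that
prescribing its values at given frequencies is a linear condition. -/
noncomputable def dtft {N : ℕ} (z : ℂ) : EuclideanSpace ℂ (Fin N) →ₗ[ℂ] ℂ :=
  ∑ n : Fin N, Complex.exp (-(2 * π * Complex.I * n * z)) • EuclideanSpace.projₗ n

section Dtft

variable {N : ℕ} (v : EuclideanSpace ℂ (Fin N))

lemma dtft_apply (z : ℂ) :
    dtft z v = ∑ n : Fin N, Complex.exp (-(2 * π * Complex.I * n * z)) * v n := by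
  simp [dtft]

lemma differentiable_dtft : Differentiable ℂ fun z ↦ dtft z v := by
  simp only [dtft_apply]
  fun_prop

lemma norm_dtft_le (z : ℂ) : ‖dtft z v‖ ≤ √N * ‖v‖ * exp (π * N * (|z.im| + z.im)) := by
  have hterm (n : Fin N) : ‖Complex.exp (-(2 * π * Complex.I * n * z)) * v n‖ ≤
      ‖v n‖ * exp (π * N * (|z.im| + z.im)) := by
    have hnorm : ‖Complex.exp (-(2 * π * Complex.I * n * z))‖ = exp (π * n * (z.im + z.im)) := by
      rw [Complex.norm_exp]
      congr 1
      simp only [Complex.neg_re, Complex.mul_re, Complex.re_ofNat, Complex.ofReal_re,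
        Complex.im_ofNat, Complex.ofReal_im, mul_zero, sub_zero, Complex.I_re, Complex.mul_im,
        zero_mul, add_zero, Complex.I_im, mul_one, sub_self, Complex.natCast_re,
        Complex.natCast_im, zero_add, zero_sub, neg_neg]
      ring
    have him : 0 ≤ |z.im| + z.im := by linarith [neg_abs_le z.im]
    rw [norm_mul, hnorm, mul_comm]
    gcongr ‖v n‖ * exp ?_
    calc π * n * (z.im + z.im) ≤ π * n * (|z.im| + z.im) := by
          gcongr
          exact le_abs_self _
      _ ≤ π * N * (|z.im| + z.im) := by
          gcongr
          exact n.is_le'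
  calc ‖dtft z v‖ ≤ ∑ n, ‖v n‖ * exp (π * N * (|z.im| + z.im)) := by
        rw [dtft_apply]
        exact (norm_sum_le _ _).trans (Finset.sum_le_sum fun n _ ↦ hterm n)
    _ ≤ √N * ‖v‖ * exp (π * N * (|z.im| + z.im)) := by
        rw [← Finset.sum_mul]
        gcongr
        simpa using sum_norm_le_sqrt_card_mul_norm v

lemma norm_dtft_le_of_forall_int_div_eq_zero {M a x : ℝ} {L : ℕ} (hM : 0 < M) (hNM : N ≤ M)
    (hzero : ∀ k : ℤ, |k| ≤ L → dtft (k / M) v = 0) (ha : 1 ≤ a) (hx : M * |x| + a ≤ L + 1 / 2) :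
    ‖dtft x v‖ ≤ 4 * (√N * ‖v‖) * exp (-(π * (1 - N / M) * a / 4)) := by
  -- `dtft · v` grows only in the upper half-plane, with exponential type `2πN`. The exponential
  -- factor splits this evenly between the two half-planes; type `πN` is what the sine can absorb.
  let F : ℂ → ℂ := fun z ↦ Complex.exp (π * Complex.I * N * (z / M)) * dtft (z / M) v
  have hnorm (z : ℂ) : ‖F z‖ = exp (-(π * N * (z.im / M))) * ‖dtft (z / M) v‖ := by
    rw [norm_mul, Complex.norm_exp]
    congr 2
    simp
  have hF : Differentiable ℂ F :=
    Differentiable.mul (by fun_prop) ((differentiable_dtft v).comp (by fun_prop))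
  have hgrowth (z : ℂ) : ‖F z‖ ≤ √N * ‖v‖ * exp (π * (N / M) * |z.im|) := by
    rw [hnorm]
    calc _ ≤ exp (-(π * N * (z.im / M))) *
          (√N * ‖v‖ * exp (π * N * (|(z / M).im| + (z / M).im))) := by
          gcongr
          exact norm_dtft_le v _
      _ = √N * ‖v‖ * exp (-(π * N * (z.im / M)) + π * N * (|(z / M).im| + (z / M).im)) := by
          rw [exp_add]; ring
      _ = √N * ‖v‖ * exp (π * (N / M) * |z.im|) := by
          rw [Complex.div_ofReal_im, abs_div, abs_of_pos hM]
          congr 2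
          ring
  have hFx := norm_le_of_forall_int_eq_zero (x := M * x) hF hgrowth
    (fun k hk ↦ by simp [F, hzero k hk]) ((div_le_one hM).2 hNM) ha
    (by rwa [abs_mul, abs_of_pos hM])
  have hMx : (M : ℂ) * x / M = x := mul_div_cancel_left₀ _ (by exact_mod_cast hM.ne')
  simpa [hnorm, hMx] using hFx

lemma norm_dtft_le_of_forall_oversampled_grid_eq_zero {W r f : ℝ} {L : ℕ} (hr : 1 < r)
    (hN : 1 ≤ N * W * r * (r - 1)) (hL : N * W * r ^ 2 ≤ L)
    (hzero : ∀ k : ℤ, |k| ≤ L → dtft (k / (r * N : ℝ)) v = 0) (hf : |f| ≤ W) :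
    ‖dtft f v‖ ≤ 4 * (√N * ‖v‖) * exp (-(π * W * (r - 1) ^ 2 / 4 * N)) := by
  have hN₀ : 0 < (N : ℝ) := by
    rcases N.eq_zero_or_pos with rfl | hpos
    · norm_num at hN
    · exact_mod_cast hpos
  have hmargin : r * N * |f| + N * W * r * (r - 1) ≤ L + 1 / 2 := by
    calc r * N * |f| + N * W * r * (r - 1) ≤ r * N * W + N * W * r * (r - 1) := by gcongr
      _ = N * W * r ^ 2 := by ring
      _ ≤ L + 1 / 2 := by linarith
  convert norm_dtft_le_of_forall_int_div_eq_zero v (by positivity)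
    (le_mul_of_one_le_left hN₀.le hr.le) hzero hN hmargin using 3
  field_simp

lemma star_dtft_mul_dtft (f : ℝ) :
    star (dtft f v) * dtft f v = ∑ m : Fin N, ∑ n : Fin N, star (v m) * v n *
      Complex.exp (2 * π * Complex.I * f * ((m : ℕ) - (n : ℕ))) := by
  rw [dtft_apply, star_sum, Finset.sum_mul_sum]
  refine Finset.sum_congr rfl fun m _ ↦ Finset.sum_congr rfl fun n _ ↦ ?_
  have hexp : Complex.exp (2 * π * Complex.I * f * ((m : ℕ) - (n : ℕ))) =
      star (Complex.exp (-(2 * π * Complex.I * m * f))) *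
        Complex.exp (-(2 * π * Complex.I * n * f)) := by
    rw [Complex.star_def, ← Complex.exp_conj, ← Complex.exp_add]
    congr 1
    simp only [map_neg, map_mul, Complex.conj_I, Complex.conj_ofReal, map_natCast, map_ofNat]
    ring
  rw [hexp, star_mul]
  ring

lemma inner_toEuclideanLin_prolate1D {𝕎 : Set ℝ} (h𝕎 : volume 𝕎 ≠ ⊤) :
    ⟪v, toEuclideanLin (prolate1D N 𝕎) v⟫_ℂ = ∫ f in 𝕎, star (dtft f v) * dtft f v := by
  have hexp (m n : Fin N) : IntegrableOn
      (fun f : ℝ ↦ Complex.exp (2 * π * Complex.I * f * ((m : ℕ) - (n : ℕ)))) 𝕎 := by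
    refine Measure.integrableOn_of_bounded (M := 1) h𝕎 (by fun_prop) (.of_forall fun f ↦ ?_)
    rw [Complex.norm_exp]
    simp
  have hint (m n : Fin N) : IntegrableOn (fun f : ℝ ↦ star (v m) * v n *
      Complex.exp (2 * π * Complex.I * f * ((m : ℕ) - (n : ℕ)))) 𝕎 :=
    (hexp m n).const_mul _
  simp only [star_dtft_mul_dtft]
  rw [integral_finsetSum _ fun m _ ↦ integrable_finsetSum _ fun n _ ↦ hint m n]
  simp only [integral_finsetSum _ fun n _ ↦ hint _ n, integral_const_mul]
  rw [EuclideanSpace.inner_eq_star_dotProduct, dotProduct_comm]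
  simp only [dotProduct, ofLp_toLpLin, toLin'_apply, mulVec, Pi.star_apply, Finset.mul_sum,
    prolate1D]
  exact Finset.sum_congr rfl fun m _ ↦ Finset.sum_congr rfl fun n _ ↦ by ring

lemma norm_inner_toEuclideanLin_prolate1D_le {𝕎 : Set ℝ} (h𝕎 : volume 𝕎 ≠ ⊤) {C : ℝ}
    (hC : ∀ f ∈ 𝕎, ‖dtft f v‖ ≤ C) :
    ‖⟪v, toEuclideanLin (prolate1D N 𝕎) v⟫_ℂ‖ ≤ C ^ 2 * volume.real 𝕎 := by
  rw [inner_toEuclideanLin_prolate1D v h𝕎]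
  refine norm_setIntegral_le_of_norm_le_const h𝕎.lt_top fun f hf ↦ ?_
  rw [norm_mul, norm_star, ← sq]
  gcongr
  exact hC f hf

end Dtft

lemma norm_inner_toEuclideanLin_prolate1D_le_of_subset_Icc {N : ℕ} (v : EuclideanSpace ℂ (Fin N))
    {W C : ℝ} {𝕎 : Set ℝ} (hW : 0 ≤ W) (h𝕎 : 𝕎 ⊆ Icc (-W) W) (hC : ∀ f ∈ 𝕎, ‖dtft f v‖ ≤ C) :
    ‖⟪v, toEuclideanLin (prolate1D N 𝕎) v⟫_ℂ‖ ≤ C ^ 2 * (2 * W) := by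
  have hvol : volume.real 𝕎 ≤ 2 * W := by
    calc volume.real 𝕎 ≤ volume.real (Icc (-W) W) := measureReal_mono h𝕎 (by simp)
      _ = 2 * W := by rw [volume_real_Icc_of_le (by linarith)]; ring
  have hfin : volume 𝕎 ≠ ⊤ := ((measure_mono h𝕎).trans_lt measure_Icc_lt_top).ne
  exact (norm_inner_toEuclideanLin_prolate1D_le v hfin hC).trans (by gcongr)

lemma le_exp_of_le_card_eigenvalues_prolate1D {N : ℕ} {W r t : ℝ} {𝕎 : Set ℝ}
    (h𝕎 : 𝕎 ⊆ Icc (-W) W) (hA : (prolate1D N 𝕎).IsHermitian) (hW : 0 ≤ W) (hr : 1 < r)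
    (hN : 1 ≤ N * W * r * (r - 1))
    (hcard : 2 * N * W * r ^ 2 + 3 ≤ Fintype.card {i // t ≤ hA.eigenvalues i}) :
    t ≤ 32 * W * N * exp (-(2 * (π * W * (r - 1) ^ 2 / 4 * N))) := by
  let L : ℕ := ⌈N * W * r ^ 2⌉₊
  let grid : Finset ℤ := Finset.Icc (-L) L
  have hgrid : grid.card < Fintype.card {i // t ≤ hA.eigenvalues i} := by
    have hL : (L : ℝ) < N * W * r ^ 2 + 1 := Nat.ceil_lt_add_one (by positivity)
    have hcard_grid : grid.card = 2 * L + 1 := by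
      rw [Int.card_Icc]
      omega
    rw [hcard_grid, ← Nat.cast_lt (α := ℝ)]
    push_cast
    linarith
  obtain ⟨v, hv₀, hv, hle⟩ := exists_ne_zero_map_eq_zero_mul_sq_norm_le_of_isHermitian hA
    (LinearMap.pi fun k : grid ↦ dtft (k / (r * N : ℝ)))
    (by rwa [Module.finrank_fintype_fun_eq_card, Fintype.card_coe])
  have hdecay (f : ℝ) (hf : f ∈ 𝕎) :
      ‖dtft f v‖ ≤ 4 * (√N * ‖v‖) * exp (-(π * W * (r - 1) ^ 2 / 4 * N)) :=
    norm_dtft_le_of_forall_oversampled_grid_eq_zero v hr hN (Nat.le_ceil _)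
      (fun k hk ↦ congrFun hv ⟨k, Finset.mem_Icc.2 (abs_le.1 hk)⟩) (abs_le.2 (h𝕎 hf))
  refine le_of_mul_le_mul_right ?_ (by positivity : 0 < ‖v‖ ^ 2)
  calc t * ‖v‖ ^ 2 ≤ ‖⟪v, toEuclideanLin (prolate1D N 𝕎) v⟫_ℂ‖ := hle.trans (RCLike.re_le_norm _)
    _ ≤ (4 * (√N * ‖v‖) * exp (-(π * W * (r - 1) ^ 2 / 4 * N))) ^ 2 * (2 * W) :=
      norm_inner_toEuclideanLin_prolate1D_le_of_subset_Icc v hW h𝕎 hdecay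
    _ = 32 * W * √N ^ 2 * exp (-(π * W * (r - 1) ^ 2 / 4 * N)) ^ 2 * ‖v‖ ^ 2 := by ring
    _ = _ := by
      rw [sq_sqrt N.cast_nonneg, ← exp_nat_mul]
      congr 3
      push_cast
      ring

lemma mul_exp_neg_two_mul_le {κ : ℝ} (hκ : 0 < κ) (x : ℝ) :
    x * exp (-(2 * (κ * x))) ≤ exp (-(κ * x)) / κ := by
  have hbound : κ * x * exp (-(κ * x)) ≤ 1 :=
    (mul_exp_neg_le_exp_neg_one _).trans (exp_le_one_iff.2 (by norm_num))
  calc x * exp (-(2 * (κ * x))) = exp (-(κ * x)) / κ * (κ * x * exp (-(κ * x))) := by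
        rw [two_mul, neg_add, exp_add]
        field_simp
    _ ≤ exp (-(κ * x)) / κ := mul_le_of_le_one_right (by positivity) hbound

theorem dpss_eigenvalue_cluster_near_zero_general {W : ℝ} (hW : 0 < W) {ε : ℝ} (hε : 0 < ε) :
    ∃ (C₃ C₄ : ℝ) (N₂ : ℕ), 0 < C₃ ∧ 0 < C₄ ∧ 1 ≤ N₂ ∧
      ∀ (N : ℕ), N₂ ≤ N → ∀ 𝕎 ⊆ Icc (-W) W,
        ∀ (hA : (prolate1D N 𝕎).IsHermitian) (μ : Fin N → ℝ),
          Antitone μ →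
          (∃ σ : Equiv.Perm (Fin N), hA.eigenvalues = μ ∘ σ) →
          ∀ l : Fin N, ⌈2 * (N : ℝ) * W * (1 + ε)⌉₊ ≤ (l : ℕ) →
            μ l ≤ C₃ * exp (-C₄ * (N : ℝ)) := by
  let r : ℝ := √(1 + ε / 2)
  have hr : 1 < r := by
    rw [lt_sqrt one_pos.le]
    linarith
  have hr_sq : r ^ 2 = 1 + ε / 2 := sq_sqrt (by positivity)
  have : 0 < r - 1 := sub_pos.2 hr
  let κ : ℝ := π * W * (r - 1) ^ 2 / 4
  have hκ : 0 < κ := by positivity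
  refine ⟨32 * W / κ, κ, max 1 (max ⌈1 / (W * r * (r - 1))⌉₊ ⌈3 / (W * ε)⌉₊),
    by positivity, hκ, le_max_left _ _, ?_⟩
  rintro N hN 𝕎 h𝕎 hA μ hμ ⟨σ, hσ⟩ l hl
  simp only [max_le_iff, Nat.ceil_le] at hN hl
  obtain ⟨-, hN_width, hN_gap⟩ := hN
  rw [div_le_iff₀ (by positivity)] at hN_width hN_gap
  have hcard := lt_card_subtype_le_comp_perm_of_antitone hμ σ l
  rw [← hσ, ← Nat.cast_lt (α := ℝ)] at hcard
  calc μ l ≤ 32 * W * N * exp (-(2 * (κ * N))) :=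
        le_exp_of_le_card_eigenvalues_prolate1D h𝕎 hA hW.le hr (by linarith)
          (by rw [hr_sq]; linarith)
    _ = 32 * W * (N * exp (-(2 * (κ * N)))) := mul_assoc _ _ _
    _ ≤ 32 * W * (exp (-(κ * N)) / κ) := by
        gcongr
        exact mul_exp_neg_two_mul_le hκ N
    _ = 32 * W / κ * exp (-κ * N) := by rw [neg_mul]; ring

theorem dpss_eigenvalue_cluster_near_zero
    (W : ℝ) (hW : W ∈ Set.Ioo (0 : ℝ) (1 / 2)) (ε : ℝ)
    (hε : ε ∈ Set.Ioo (0 : ℝ) (1 / (2 * W) - 1)) :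
    ∃ (C₃ C₄ : ℝ) (N₂ : ℕ), 0 < C₃ ∧ 0 < C₄ ∧ 1 ≤ N₂ ∧
      ∀ (N : ℕ), N₂ ≤ N →
        ∀ (hA : (prolate1D N (Set.Icc (-W) W)).IsHermitian) (μ : Fin N → ℝ),
          Antitone μ →
          (∃ σ : Equiv.Perm (Fin N), hA.eigenvalues = μ ∘ σ) →
          ∀ l : Fin N, ⌈2 * (N : ℝ) * W * (1 + ε)⌉₊ ≤ (l : ℕ) →
            μ l ≤ C₃ * Real.exp (-C₄ * (N : ℝ)) := by
  obtain ⟨C₃, C₄, N₂, hC₃, hC₄, hN₂, hle⟩ := dpss_eigenvalue_cluster_near_zero_general hW.1 hε.1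
  exact ⟨C₃, C₄, N₂, hC₃, hC₄, hN₂, fun N hN ↦ hle N hN _ subset_rfl⟩
end
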